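/- Let a, b, x_1, x_2, y be distinct, let f be a polymatroid on {a,b}, and let f_X on {a,b,x_1,x_2} and f_y on {a,b,y} be polymatroids extending f. Then f_X and f_y have an amalgam if and only if the following inequality holds for each choice in the braced alternative and for all inequalities obtained from it by exchanging a with b and by exchanging x_1 with x_2: {f_X[a,b,x_1,x_2] or f_X[a,x_1,b,x_2]} + f_y(y,a|b) + f_y(y,b|a) + f_y(a,b|y) + 3·f_y(y|ab) ≥ 0. -/

import Mathlib

open Finset

noncomputable section

variable {α : Type*} [DecidableEq α]

/-- `f` is a polymatroid with ground set `M`: it vanishes on `∅` and is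
non-negative, monotone and submodular on subsets of `M`. -/
def IsPolymatroid (M : Finset α) (f : Finset α → ℝ) : Prop :=
  f ∅ = 0 ∧
  (∀ A, A ⊆ M → 0 ≤ f A) ∧
  (∀ A B, A ⊆ B → B ⊆ M → f A ≤ f B) ∧
  (∀ A B, A ⊆ M → B ⊆ M → f (A ∪ B) + f (A ∩ B) ≤ f A + f B)

/-- `pmi f I J K` is the expression `f(I,J|K) = f(I∪K)+f(J∪K)−f(I∪J∪K)−f(K)`. -/
def pmi (f : Finset α → ℝ) (I J K : Finset α) : ℝ :=
  f (I ∪ K) + f (J ∪ K) - f (I ∪ J ∪ K) - f K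

/-- `pcd f I K` is the expression `f(I|K) = f(I∪K) − f(K)`. -/
def pcd (f : Finset α → ℝ) (I K : Finset α) : ℝ := f (I ∪ K) - f K

/-- Polymatroids `fX` on `M ∪ X` and `fY` on `M ∪ Y` have an amalgam: a common
polymatroid extension on `M ∪ X ∪ Y`. -/
def HaveAmalgam (M X Y : Finset α) (fX fY : Finset α → ℝ) : Prop :=
  ∃ g : Finset α → ℝ, IsPolymatroid (M ∪ X ∪ Y) g ∧
    (∀ A, A ⊆ M ∪ X → g A = fX A) ∧ (∀ A, A ⊆ M ∪ Y → g A = fY A)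

/-- Polymatroids `fX` on `M ∪ X` and `fY` on `M ∪ Y` are adhesive: they have a
modular common extension, i.e. one with `g(X,Y|M) = 0`. -/
def Adhesive (M X Y : Finset α) (fX fY : Finset α → ℝ) : Prop :=
  ∃ g : Finset α → ℝ, IsPolymatroid (M ∪ X ∪ Y) g ∧
    (∀ A, A ⊆ M ∪ X → g A = fX A) ∧ (∀ A, A ⊆ M ∪ Y → g A = fY A) ∧
    pmi g X Y M = 0

/-- The Ingleton expression `f[I,J,K,L] = −f(I,J)+f(I,J|K)+f(I,J|L)+f(K,L)`. -/
def ingleton (f : Finset α → ℝ) (I J K L : Finset α) : ℝ :=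
  -pmi f I J ∅ + pmi f I J K + pmi f I J L + pmi f K L ∅

/-! Adding `y` to a polymatroid `f` amounts to choosing its increment `D A = f (A ∪ y) - f A`, and
`f_X` and `f_y` have an amalgam iff the increment of `f_y`, known on `{a, b}`, extends to an
increment of `f_X`. The inequalities say that `D ∅ ≤ f(a,b) + i + 2 D {a} + 2 D {b}` for every
Ingleton expression `i` not of the form `[x₁,x₂,a,b]`, and every increment satisfies them.

Conversely, the profiles `(D ∅, D {a}, D {b}, D {a, b})` of increments are closed under convex
combinations, adding constants and truncating `D ∅`. If some Ingleton expression equals `-δ < 0`,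
explicit increments attain its bound on a simplex of profiles; if none does, the profile
`(f(a,b), 0, 0, 0)` of a common information of `a` and `b` plays this role with `δ = 0`. Minima of
increments by elements of the chain `{a} ⊆ {a, b}` give two more edges, and these together generate
all the required profiles. -/

theorem pmi_comm (f : Finset α → ℝ) (I J K : Finset α) : pmi f I J K = pmi f J I K := by
  simp only [pmi, union_comm I J, add_comm]

theorem pmi_singleton_singleton_empty (f : Finset α → ℝ) (a b : α) :
    pmi f {a} {b} ∅ = f {a} + f {b} - f {a, b} - f ∅ := by
  simp only [pmi, union_empty, singleton_union]

theorem pmi_add_pmi_add_pmi_add_pcd (g : Finset α → ℝ) (a b y : α) :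
    pmi g {y} {a} {b} + pmi g {y} {b} {a} + pmi g {a} {b} {y} + 3 * pcd g {y} {a, b} =
      pmi g {a} {b} ∅ + 2 * (g (insert y {a}) - g {a}) + 2 * (g (insert y {b}) - g {b}) -
        (g (insert y ∅) - g ∅) := by
  have h₁ : ({y} ∪ {a} ∪ {b} : Finset α) = {y, a, b} := by grind
  have h₂ : ({y} ∪ {b} ∪ {a} : Finset α) = {y, a, b} := by grind
  have h₃ : ({a} ∪ {b} ∪ {y} : Finset α) = {y, a, b} := by grind
  rw [pmi_singleton_singleton_empty]
  simp only [pmi, pcd, h₁, h₂, h₃]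
  simp only [singleton_union, insert_empty_eq, pair_comm _ y, pair_comm b a]
  ring

/-- The increments of one-point extensions: if `f` is a polymatroid on `M`, then `D` is an increment
of `f` exactly when `f` on subsets of `M` together with `insert y A ↦ f A + D A` is a polymatroid on
`insert y M`, see `haveAmalgam_singleton_iff`. -/
structure IsIncrement (M : Finset α) (f D : Finset α → ℝ) : Prop where
  nonneg : ∀ A, A ⊆ M → 0 ≤ D A
  antitone : ∀ A B, A ⊆ B → B ⊆ M → D B ≤ D A
  add_monotone : ∀ A B, A ⊆ B → B ⊆ M → f A + D A ≤ f B + D B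
  add_submodular : ∀ A B, A ⊆ M → B ⊆ M →
    f (A ∪ B) + D (A ∪ B) + (f (A ∩ B) + D (A ∩ B)) ≤ f A + D A + (f B + D B)

theorem IsPolymatroid.isIncrement {M : Finset α} {y : α} {g : Finset α → ℝ}
    (hg : IsPolymatroid (insert y M) g) (hy : y ∉ M) :
    IsIncrement M g (fun A => g (insert y A) - g A) := by
  obtain ⟨-, -, hmono, hsub⟩ := hg
  have hM : ∀ {A}, A ⊆ M → A ⊆ insert y M := fun h => h.trans (subset_insert y M)
  refine ⟨fun A hA => ?_, fun A B hAB hB => ?_, fun A B hAB hB => ?_, fun A B hA hB => ?_⟩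
  · linarith [hmono A (insert y A) (subset_insert y A) (insert_subset_insert y hA)]
  · have h := hsub (insert y A) B (insert_subset_insert y (hAB.trans hB)) (hM hB)
    rw [insert_union, union_eq_right.2 hAB, insert_inter_of_notMem fun h => hy (hB h),
      inter_eq_left.2 hAB] at h
    linarith
  · linarith [hmono _ _ (insert_subset_insert y hAB) (insert_subset_insert y hB)]
  · have h := hsub _ _ (insert_subset_insert y hA) (insert_subset_insert y hB)
    rw [← insert_union_distrib, ← insert_inter_distrib] at h
    linarith

namespace IsIncrement

variable {M : Finset α} {f D D₁ D₂ : Finset α → ℝ}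

theorem congr {f' D' : Finset α → ℝ} (h : IsIncrement M f D) (hf : ∀ A ⊆ M, f A = f' A)
    (hD : ∀ A ⊆ M, D A = D' A) : IsIncrement M f' D' where
  nonneg A hA := hD A hA ▸ h.nonneg A hA
  antitone A B hAB hB := by
    simpa only [hD _ hB, hD _ (hAB.trans hB)] using h.antitone A B hAB hB
  add_monotone A B hAB hB := by
    simpa only [hf _ hB, hD _ hB, hf _ (hAB.trans hB), hD _ (hAB.trans hB)] using
      h.add_monotone A B hAB hB
  add_submodular A B hA hB := by
    have hU : A ∪ B ⊆ M := union_subset hA hB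
    have hI : A ∩ B ⊆ M := inter_subset_left.trans hA
    simpa only [hf _ hA, hD _ hA, hf _ hB, hD _ hB, hf _ hU, hD _ hU, hf _ hI, hD _ hI] using
      h.add_submodular A B hA hB

theorem isPolymatroid_extend {y : α} (h : IsIncrement M f D) (hf : IsPolymatroid M f) :
    IsPolymatroid (insert y M)
      (fun A => if y ∈ A then f (A.erase y) + D (A.erase y) else f A) := by
  obtain ⟨hf0, hnonneg, hmono, hsub⟩ := hf
  have hE : ∀ {A}, A ⊆ insert y M → A.erase y ⊆ M := fun hA => subset_insert_iff.1 hA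
  have hM : ∀ {A}, A ⊆ insert y M → y ∉ A → A ⊆ M :=
    fun hA hy => (subset_insert_iff_of_notMem hy).1 hA
  refine ⟨by simpa using hf0, fun A hA => ?_, fun A B hAB hB => ?_, fun A B hA hB => ?_⟩
  · by_cases hy : y ∈ A
    · simpa only [hy, if_true] using add_nonneg (hnonneg _ (hE hA)) (h.nonneg _ (hE hA))
    · simpa only [hy, if_false] using hnonneg _ (hM hA hy)
  · by_cases hyA : y ∈ A
    · simpa only [hyA, hAB hyA, if_true] using
        h.add_monotone _ _ (erase_subset_erase y hAB) (hE hB)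
    · by_cases hyB : y ∈ B
      · simp only [hyA, hyB, if_true, if_false]
        linarith [hmono _ _ (subset_erase.2 ⟨hAB, hyA⟩) (hE hB), h.nonneg _ (hE hB)]
      · simpa only [hyA, hyB, if_false] using hmono _ _ hAB (hM hB hyB)
  · have mixed : ∀ A B, A ⊆ M → B ⊆ M →
        f (A ∪ B) + D (A ∪ B) + f (A ∩ B) ≤ f A + D A + f B := fun A B hA hB => by
      linarith [hsub A B hA hB, h.antitone _ _ subset_union_left (union_subset hA hB)]
    by_cases hyA : y ∈ A <;> by_cases hyB : y ∈ B <;>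
      simp only [mem_union, mem_inter, hyA, hyB, or_self, or_true, true_or, and_self, and_true,
        and_false, if_true, if_false, erase_union_distrib]
    · simpa only [erase_inter, inter_erase, erase_idem] using
        h.add_submodular _ _ (hE hA) (hE hB)
    · simpa only [erase_inter, erase_eq_of_notMem hyB,
        erase_eq_of_notMem fun h => hyB (mem_inter.1 h).2] using mixed _ _ (hE hA) (hM hB hyB)
    · have h := mixed _ _ (hE hB) (hM hA hyA)
      rw [erase_inter, erase_eq_of_notMem fun h => hyA (mem_inter.1 h).2, inter_comm,
        union_comm] at h
      rw [erase_eq_of_notMem hyA]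
      linarith
    · exact hsub A B (hM hA hyA) (hM hB hyB)

theorem convex_setOf (M : Finset α) (f : Finset α → ℝ) : Convex ℝ {D | IsIncrement M f D} := by
  rintro D₁ h₁ D₂ h₂ s t hs ht hst
  have hf : ∀ A, f A = s * f A + t * f A := fun A => by rw [← add_mul, hst, one_mul]
  refine ⟨fun A hA => ?_, fun A B hAB hB => ?_, fun A B hAB hB => ?_, fun A B hA hB => ?_⟩ <;>
    simp only [Pi.add_apply, Pi.smul_apply, smul_eq_mul]
  · have := h₁.nonneg A hA
    have := h₂.nonneg A hA
    positivity
  · have := h₁.antitone A B hAB hB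
    have := h₂.antitone A B hAB hB
    gcongr
  · linarith [hf A, hf B, mul_le_mul_of_nonneg_left (h₁.add_monotone A B hAB hB) hs,
      mul_le_mul_of_nonneg_left (h₂.add_monotone A B hAB hB) ht]
  · linarith [hf A, hf B, hf (A ∪ B), hf (A ∩ B),
      mul_le_mul_of_nonneg_left (h₁.add_submodular A B hA hB) hs,
      mul_le_mul_of_nonneg_left (h₂.add_submodular A B hA hB) ht]

-- The condition is Lovász's, for the minimum of two submodular functions to be submodular.
theorem inf_of_monotone_sub (h₁ : IsIncrement M f D₁) (h₂ : IsIncrement M f D₂)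
    (h : ∀ A B, A ⊆ B → B ⊆ M → D₁ A - D₂ A ≤ D₁ B - D₂ B) :
    IsIncrement M f (fun A => min (D₁ A) (D₂ A)) := by
  refine ⟨fun A hA => le_min (h₁.nonneg A hA) (h₂.nonneg A hA),
    fun A B hAB hB => min_le_min (h₁.antitone A B hAB hB) (h₂.antitone A B hAB hB),
    fun A B hAB hB => ?_, fun A B hA hB => ?_⟩
  · simp only [← min_add_add_left]
    exact min_le_min (h₁.add_monotone A B hAB hB) (h₂.add_monotone A B hAB hB)
  · have i₁ := min_le_left (D₁ (A ∩ B)) (D₂ (A ∩ B))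
    have i₂ := min_le_right (D₁ (A ∩ B)) (D₂ (A ∩ B))
    have u₁ := min_le_left (D₁ (A ∪ B)) (D₂ (A ∪ B))
    have u₂ := min_le_right (D₁ (A ∪ B)) (D₂ (A ∪ B))
    have s₁ := h₁.add_submodular A B hA hB
    have s₂ := h₂.add_submodular A B hA hB
    rcases min_choice (D₁ A) (D₂ A) with hA' | hA' <;>
      rcases min_choice (D₁ B) (D₂ B) with hB' | hB' <;> rw [hA', hB']
    · linarith
    · linarith [h (A ∩ B) A inter_subset_left hA]
    · linarith [h (A ∩ B) B inter_subset_right hB]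
    · linarith

theorem of_polymatroid (hf : IsPolymatroid M f) {B : Finset α} (hB : B ⊆ M) {c : ℝ} (hc : 0 ≤ c) :
    IsIncrement M f (fun A => f (A ∪ B) - f A + c) := by
  obtain ⟨-, -, hmono, hsub⟩ := hf
  refine ⟨fun A hA => ?_, fun A A' hAA' hA' => ?_, fun A A' hAA' hA' => ?_,
    fun A A' hA hA' => ?_⟩
  · linarith [hmono A (A ∪ B) subset_union_left (union_subset hA hB)]
  · have h := hsub (A ∪ B) A' (union_subset (hAA'.trans hA') hB) hA'
    have hI := hmono A ((A ∪ B) ∩ A') (subset_inter subset_union_left hAA')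
      (inter_subset_right.trans hA')
    rw [union_right_comm, union_eq_right.2 hAA'] at h
    linarith
  · linarith [hmono _ _ (union_subset_union_left hAA') (union_subset hA' hB)]
  · have h := hsub (A ∪ B) (A' ∪ B) (union_subset hA hB) (union_subset hA' hB)
    rw [← union_union_distrib_right, ← inter_union_distrib_right] at h
    linarith

theorem const (hf : IsPolymatroid M f) {c : ℝ} (hc : 0 ≤ c) : IsIncrement M f (fun _ => c) := by
  simpa only [union_empty, sub_self, zero_add] using of_polymatroid hf (empty_subset M) hc

theorem add_const (h : IsIncrement M f D) {c : ℝ} (hc : 0 ≤ c) :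
    IsIncrement M f (fun A => D A + c) where
  nonneg A hA := add_nonneg (h.nonneg A hA) hc
  antitone A B hAB hB := by linarith [h.antitone A B hAB hB]
  add_monotone A B hAB hB := by linarith [h.add_monotone A B hAB hB]
  add_submodular A B hA hB := by linarith [h.add_submodular A B hA hB]

theorem min_const (hf : IsPolymatroid M f) (h : IsIncrement M f D) {c : ℝ} (hc : 0 ≤ c) :
    IsIncrement M f (fun A => min (D A) c) := by
  simpa only [min_comm] using
    (const hf hc).inf_of_monotone_sub h fun A B hAB hB => by linarith [h.antitone A B hAB hB]

end IsIncrement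

theorem haveAmalgam_singleton_iff {M X : Finset α} {y : α} {fX fY : Finset α → ℝ}
    (hy : y ∉ M ∪ X) (hfX : IsPolymatroid (M ∪ X) fX) (hXY : ∀ A ⊆ M, fX A = fY A) :
    HaveAmalgam M X {y} fX fY ↔
      ∃ D, IsIncrement (M ∪ X) fX D ∧ ∀ A ⊆ M, D A = fY (insert y A) - fY A := by
  simp only [HaveAmalgam, union_singleton]
  constructor
  · rintro ⟨g, hg, hgX, hgY⟩
    refine ⟨_, (hg.isIncrement hy).congr hgX fun _ _ => rfl, fun A hA => ?_⟩
    rw [hgY _ (insert_subset_insert y hA), hgY _ (hA.trans (subset_insert y M))]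
  · rintro ⟨D, hD, hDY⟩
    refine ⟨_, hD.isPolymatroid_extend hfX, fun A hA => if_neg fun h => hy (hA h), fun A hA => ?_⟩
    by_cases hyA : y ∈ A
    · have hA' := subset_insert_iff.1 hA
      simp only [hyA, if_true, hDY _ hA', hXY _ hA', insert_erase, add_sub_cancel]
    · simpa only [hyA, if_false] using hXY A ((subset_insert_iff_of_notMem hyA).1 hA)

theorem IsIncrement.pmi_add_pmi_nonneg {M : Finset α} {f D : Finset α → ℝ} (h : IsIncrement M f D)
    {I J K : Finset α} (hI : I ⊆ M) (hJ : J ⊆ M) (hK : K ⊆ M) :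
    0 ≤ pmi f I J K + pmi D I J K := by
  have hIK := union_subset hI hK
  have hJK := union_subset hJ hK
  have hsub := h.add_submodular _ _ hIK hJK
  have hmono := h.add_monotone K ((I ∪ K) ∩ (J ∪ K))
    (subset_inter subset_union_right subset_union_right) (inter_subset_left.trans hIK)
  rw [← union_union_distrib_right] at hsub
  unfold pmi
  linarith

theorem IsIncrement.le_add_ingleton {M : Finset α} {f D : Finset α → ℝ} (h : IsIncrement M f D)
    {I J K L : Finset α} (hI : I ⊆ M) (hJ : J ⊆ M) (hK : K ⊆ M) (hL : L ⊆ M) :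
    D ∅ ≤ 2 * D I + 2 * D J + pmi f I J ∅ + ingleton f I J K L := by
  have h₁ := h.pmi_add_pmi_nonneg hK hL (empty_subset M)
  have h₂ := h.pmi_add_pmi_nonneg hI hJ hK
  have h₃ := h.pmi_add_pmi_nonneg hI hJ hL
  have hanti : ∀ A B, A ⊆ M → B ⊆ M → D (A ∪ B) ≤ D A := fun A B hA hB =>
    h.antitone _ _ subset_union_left (union_subset hA hB)
  have n₁ := h.nonneg _ (union_subset hK hL)
  have n₂ := h.nonneg _ (union_subset (union_subset hI hJ) hK)
  have n₃ := h.nonneg _ (union_subset (union_subset hI hJ) hL)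
  simp only [ingleton, pmi, union_empty] at h₁ h₂ h₃ ⊢
  linarith [hanti I K hI hK, hanti I L hI hL, hanti J K hJ hK, hanti J L hJ hL]

theorem IsIncrement.le_add_ingleton_cross {M : Finset α} {f D : Finset α → ℝ}
    (h : IsIncrement M f D) {I J K L : Finset α} (hI : I ⊆ M) (hJ : J ⊆ M) (hK : K ⊆ M)
    (hL : L ⊆ M) :
    D ∅ ≤ 2 * D I + 2 * D K + pmi f I K ∅ + ingleton f I J K L := by
  have h₁ := h.pmi_add_pmi_nonneg hK hL (empty_subset M)
  have h₂ := h.pmi_add_pmi_nonneg hI hJ hL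
  have h₃ := h.pmi_add_pmi_nonneg hI hK hJ
  have hanti : ∀ A B, A ⊆ M → B ⊆ M → D (A ∪ B) ≤ D A := fun A B hA hB =>
    h.antitone _ _ subset_union_left (union_subset hA hB)
  have n₁ := h.nonneg _ (union_subset hK hL)
  have n₂ := h.nonneg _ (union_subset (union_subset hI hK) hJ)
  have n₃ := h.nonneg _ (union_subset (union_subset hI hJ) hL)
  simp only [ingleton, pmi, union_empty, union_right_comm I J K] at h₁ h₂ h₃ n₂ ⊢
  linarith [hanti I J hI hJ, hanti I L hI hL, hanti K J hK hJ, hanti J L hJ hL,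
    congrArg f (union_comm J K)]

/-- The polymatroid `f` on `M` has an increment with the values `p`, `qa`, `qb` and `k` on `∅`,
`{a}`, `{b}` and `{a, b}`: the data that an extension of `f` by one point has to match when it is
prescribed on `{a, b}`. -/
def HasIncrement (M : Finset α) (f : Finset α → ℝ) (a b : α) (p qa qb k : ℝ) : Prop :=
  ∃ D, IsIncrement M f D ∧ D ∅ = p ∧ D {a} = qa ∧ D {b} = qb ∧ D {a, b} = k

/-- The pairs `(D {a}, D {b})` for the increments `D` of `f` with `D {a, b} = 0` whose value `D ∅`
is the largest one allowed by submodularity of `f + D` on `{a}` and `{b}`. -/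
def saturatedPairs (M : Finset α) (f : Finset α → ℝ) (a b : α) : Set (ℝ × ℝ) :=
  {q | HasIncrement M f a b (pmi f {a} {b} ∅ + q.1 + q.2) q.1 q.2 0}

/-- Every profile with `D ∅ = f(a,b) - δ + 2 * D {a} + 2 * D {b}` that respects the submodularity
bound `D ∅ + D {a, b} ≤ f(a,b) + D {a} + D {b}` comes from an increment of `f`. These profiles form
a simplex, parametrised by `s = D {a} - D {a, b}`, `t = D {b} - D {a, b}` and `r = D {a, b}`; they
are the extreme ones when `-δ` is the value of an Ingleton expression. -/
def HasIncrementSimplex (M : Finset α) (f : Finset α → ℝ) (a b : α) (δ : ℝ) : Prop :=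
  ∀ s t r, 0 ≤ s → 0 ≤ t → 0 ≤ r → s + t + 3 * r ≤ δ →
    HasIncrement M f a b (pmi f {a} {b} ∅ - δ + 2 * s + 2 * t + 4 * r) (s + r) (t + r) r

section HasIncrement

variable {M : Finset α} {f : Finset α → ℝ} {a b : α} {p qa qb k : ℝ}

theorem HasIncrement.swap (h : HasIncrement M f a b p qa qb k) :
    HasIncrement M f b a p qb qa k := by
  obtain ⟨D, hD, hp, ha, hb, hk⟩ := h
  exact ⟨D, hD, hp, hb, ha, pair_comm b a ▸ hk⟩

theorem HasIncrementSimplex.swap {δ : ℝ} (h : HasIncrementSimplex M f a b δ) :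
    HasIncrementSimplex M f b a δ := fun s t r hs ht hr hδ => by
  have h := (h t s r ht hs hr (by linarith)).swap
  rwa [pmi_comm, add_right_comm _ (2 * t)] at h

theorem HasIncrement.add_const (h : HasIncrement M f a b p qa qb k) {c : ℝ} (hc : 0 ≤ c) :
    HasIncrement M f a b (p + c) (qa + c) (qb + c) (k + c) := by
  obtain ⟨D, hD, rfl, rfl, rfl, rfl⟩ := h
  exact ⟨_, hD.add_const hc, rfl, rfl, rfl, rfl⟩

theorem HasIncrement.truncate (hf : IsPolymatroid M f) (h : HasIncrement M f a b p qa qb k)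
    {p' : ℝ} (hp : p' ≤ p) (hp' : 0 ≤ p') (ha : qa ≤ p') (hb : qb ≤ p') (hk : k ≤ p') :
    HasIncrement M f a b p' qa qb k := by
  obtain ⟨D, hD, rfl, rfl, rfl, rfl⟩ := h
  exact ⟨_, hD.min_const hf hp', min_eq_right hp, min_eq_left ha, min_eq_left hb, min_eq_left hk⟩

theorem hasIncrement_chain (hf : IsPolymatroid M f) (ha : a ∈ M) (hb : b ∈ M) {t : ℝ}
    (ht : 0 ≤ t) (ht' : t ≤ f {a, b} - f {a}) :
    HasIncrement M f a b (f {a} + t) t (f {a, b} - f {b}) 0 := by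
  have ha' : {a} ⊆ M := singleton_subset_iff.2 ha
  have hab : {a, b} ⊆ M := insert_subset ha (singleton_subset_iff.2 hb)
  have hmono : ∀ A B, A ⊆ B → B ⊆ M → f (A ∪ {a}) - f A + t - (f (A ∪ {a, b}) - f A + 0) ≤
      f (B ∪ {a}) - f B + t - (f (B ∪ {a, b}) - f B + 0) := fun A B hAB hB => by
    have hanti := (IsIncrement.of_polymatroid hf hab le_rfl).antitone (A ∪ {a}) (B ∪ {a})
      (union_subset_union_left hAB) (union_subset hB ha')
    have haab : ({a} ∪ {a, b} : Finset α) = {a, b} := union_eq_right.2 (by simp)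
    simp only [union_assoc, haab] at hanti
    linarith
  refine ⟨_, (IsIncrement.of_polymatroid hf ha' ht).inf_of_monotone_sub
    (IsIncrement.of_polymatroid hf hab le_rfl) hmono, ?_, ?_, ?_, ?_⟩
  · simp only [empty_union, hf.1]
    exact (min_eq_left (by linarith)).trans (by ring)
  · have haab : ({a} ∪ {a, b} : Finset α) = {a, b} := union_eq_right.2 (by simp)
    simp only [union_self, haab]
    exact (min_eq_left (by linarith)).trans (by ring)
  · have hba : ({b} ∪ {a} : Finset α) = {a, b} := union_comm _ _
    have hbab : ({b} ∪ {a, b} : Finset α) = {a, b} := union_eq_right.2 (by simp)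
    simp only [hba, hbab]
    exact (min_eq_right (by linarith)).trans (by ring)
  · have haba : ({a, b} ∪ {a} : Finset α) = {a, b} := union_eq_left.2 (by simp)
    simp only [haba, union_self]
    exact (min_eq_right (by linarith)).trans (by ring)

theorem convex_saturatedPairs : Convex ℝ (saturatedPairs M f a b) := by
  rintro q ⟨D, hD, hp, ha, hb, hk⟩ q' ⟨D', hD', hp', ha', hb', hk'⟩ s t hs ht hst
  refine ⟨_, IsIncrement.convex_setOf M f hD hD' hs ht hst, ?_, ?_, ?_, ?_⟩ <;>
    simp only [Pi.add_apply, Pi.smul_apply, Prod.fst_add, Prod.snd_add, Prod.smul_fst,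
      Prod.smul_snd, smul_eq_mul, hp, ha, hb, hk, hp', ha', hb', hk']
  · linear_combination pmi f {a} {b} ∅ * hst
  · ring

theorem mem_saturatedPairs_top (hf : IsPolymatroid M f) (ha : a ∈ M) (hb : b ∈ M) {t : ℝ}
    (ht : 0 ≤ t) (ht' : t ≤ f {a, b} - f {a}) :
    (t, f {a, b} - f {b}) ∈ saturatedPairs M f a b := by
  have hp : pmi f {a} {b} ∅ + t + (f {a, b} - f {b}) = f {a} + t := by
    rw [pmi_singleton_singleton_empty, hf.1]
    ring
  simpa only [saturatedPairs, Set.mem_ofPred_eq, hp] using hasIncrement_chain hf ha hb ht ht'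

theorem mem_saturatedPairs_right (hf : IsPolymatroid M f) (ha : a ∈ M) (hb : b ∈ M) {t : ℝ}
    (ht : 0 ≤ t) (ht' : t ≤ f {a, b} - f {b}) :
    (f {a, b} - f {a}, t) ∈ saturatedPairs M f a b := by
  have hp : pmi f {a} {b} ∅ + (f {a, b} - f {a}) + t = f {b} + t := by
    rw [pmi_singleton_singleton_empty, hf.1]
    ring
  simpa only [saturatedPairs, Set.mem_ofPred_eq, hp, pair_comm b a] using
    (hasIncrement_chain hf hb ha ht (by rwa [pair_comm b a])).swap

end HasIncrement

theorem mem_of_convex_of_edges {S : Set (ℝ × ℝ)} (hS : Convex ℝ S) {δ u v : ℝ} (hδ : 0 ≤ δ)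
    (hcut : ∀ s t, 0 ≤ s → 0 ≤ t → s + t = δ → (s, t) ∈ S)
    (htop : ∀ s, 0 ≤ s → s ≤ u → (s, v) ∈ S) (hright : ∀ t, 0 ≤ t → t ≤ v → (u, t) ∈ S)
    {s t : ℝ} (hs : 0 ≤ s) (hsu : s ≤ u) (ht : 0 ≤ t) (htv : t ≤ v) (hst : δ ≤ s + t) :
    (s, t) ∈ S := by
  have vertical : ∀ s t, 0 ≤ s → s ≤ δ → s ≤ u → t ≤ v → δ ≤ s + t → (s, t) ∈ S := by
    intro s t hs hsδ hsu htv hst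
    have hseg := hS.segment_subset (hcut s (δ - s) hs (by linarith) (by ring)) (htop s hs hsu)
    rw [← Prod.image_mk_segment_right, segment_eq_Icc (by linarith)] at hseg
    exact hseg ⟨t, ⟨by linarith, htv⟩, rfl⟩
  rcases le_total s δ with hsδ | hδs
  · exact vertical s t hs hsδ hsu htv hst
  · have hseg := hS.segment_subset
      (vertical δ t hδ le_rfl (by linarith) htv (by linarith)) (hright t ht htv)
    rw [← Prod.image_mk_segment_left, segment_eq_Icc (by linarith)] at hseg
    exact hseg ⟨s, ⟨hδs, hsu⟩, rfl⟩

theorem HasIncrementSimplex.hasIncrement {M : Finset α} {f : Finset α → ℝ} {a b : α}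
    {δ p qa qb k : ℝ} (hf : IsPolymatroid M f) (ha : a ∈ M) (hb : b ∈ M) (hδ : 0 ≤ δ)
    (hsimplex : HasIncrementSimplex M f a b δ)
    (hk : 0 ≤ k) (hka : k ≤ qa) (hkb : k ≤ qb) (hap : qa ≤ p) (hbp : qb ≤ p)
    (hI : p + k ≤ pmi f {a} {b} ∅ + qa + qb) (hp : p ≤ pmi f {a} {b} ∅ - δ + 2 * qa + 2 * qb)
    (hqa : qa - k ≤ f {a, b} - f {a}) (hqb : qb - k ≤ f {a, b} - f {b}) :
    HasIncrement M f a b p qa qb k := by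
  suffices ∃ p', p ≤ p' ∧ HasIncrement M f a b p' qa qb k by
    obtain ⟨p', hp', h⟩ := this
    exact h.truncate hf hp' (by linarith) hap hbp (by linarith)
  rcases le_total (qa - k + (qb - k) + 3 * k) δ with h₁ | h₁
  · refine ⟨_, ?_, by
      simpa only [sub_add_cancel] using
        hsimplex (qa - k) (qb - k) k (by linarith) (by linarith) hk h₁⟩
    linarith
  refine ⟨pmi f {a} {b} ∅ + (qa - k) + (qb - k) + k, by linarith, ?_⟩
  rcases le_total (qa - k + (qb - k)) δ with h₂ | h₂
  · have h := (hsimplex (qa - k) (qb - k) ((δ - (qa - k) - (qb - k)) / 3) (by linarith)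
      (by linarith) (by linarith) (by linarith)).add_const
      (c := k - (δ - (qa - k) - (qb - k)) / 3) (by linarith)
    convert h using 1 <;> ring
  · have h : (qa - k, qb - k) ∈ saturatedPairs M f a b :=
      mem_of_convex_of_edges convex_saturatedPairs hδ
        (fun s t hs ht hst => by
          have h := hsimplex s t 0 hs ht le_rfl (by linarith)
          have hp : pmi f {a} {b} ∅ + s + t = pmi f {a} {b} ∅ - δ + 2 * s + 2 * t + 4 * 0 := by
            linarith
          simpa only [saturatedPairs, Set.mem_ofPred_eq, hp, add_zero] using h)
        (fun s => mem_saturatedPairs_top hf ha hb) (fun t => mem_saturatedPairs_right hf ha hb)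
        (by linarith) hqa (by linarith) hqb h₂
    simpa only [sub_add_cancel, zero_add] using HasIncrement.add_const h hk

/-- Submodularity of a function on the subsets of a four-element set, coded by the four membership
bits, restricted to the pairs `A ∪ {i}`, `A ∪ {j}`. -/
def CubeSubmodular (F : Bool → Bool → Bool → Bool → ℝ) : Prop :=
  (∀ r s, F true true r s + F false false r s ≤ F true false r s + F false true r s) ∧
  (∀ q s, F true q true s + F false q false s ≤ F true q false s + F false q true s) ∧
  (∀ q r, F true q r true + F false q r false ≤ F true q r false + F false q r true) ∧
  (∀ p s, F p true true s + F p false false s ≤ F p true false s + F p false true s) ∧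
  (∀ p r, F p true r true + F p false r false ≤ F p true r false + F p false r true) ∧
  (∀ p q, F p q true true + F p q false false ≤ F p q true false + F p q false true)

/-- Monotonicity, in the same coding, between the three-element subsets and the full set. -/
def CubeTopMonotone (F : Bool → Bool → Bool → Bool → ℝ) : Prop :=
  F false true true true ≤ F true true true true ∧
  F true false true true ≤ F true true true true ∧
  F true true false true ≤ F true true true true ∧
  F true true true false ≤ F true true true true

/-- Antitonicity, in the same coding, under adding one element. -/
def CubeAntitone (D : Bool → Bool → Bool → Bool → ℝ) : Prop :=
  (∀ q r s, D true q r s ≤ D false q r s) ∧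
  (∀ p r s, D p true r s ≤ D p false r s) ∧
  (∀ p q s, D p q true s ≤ D p q false s) ∧
  (∀ p q r, D p q r true ≤ D p q r false)

theorem antitone_of_true_le_false {g : Bool → ℝ} (h : g true ≤ g false) : Antitone g := by
  rintro (_ | _) (_ | _) hxy
  exacts [le_rfl, h, absurd hxy (by decide), le_rfl]

theorem CubeAntitone.le {D : Bool → Bool → Bool → Bool → ℝ} (h : CubeAntitone D)
    {p q r s p' q' r' s' : Bool} (hp : p ≤ p') (hq : q ≤ q') (hr : r ≤ r') (hs : s ≤ s') :
    D p' q' r' s' ≤ D p q r s := by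
  obtain ⟨h₁, h₂, h₃, h₄⟩ := h
  calc D p' q' r' s'
    _ ≤ D p q' r' s' := antitone_of_true_le_false (g := (D · q' r' s')) (h₁ q' r' s') hp
    _ ≤ D p q r' s' := antitone_of_true_le_false (g := (D p · r' s')) (h₂ p r' s') hq
    _ ≤ D p q r s' := antitone_of_true_le_false (g := (D p q · s')) (h₃ p q s') hr
    _ ≤ D p q r s := antitone_of_true_le_false (h₄ p q r) hs

theorem CubeSubmodular.cubeAntitone_neg {F : Bool → Bool → Bool → Bool → ℝ}
    (h : CubeSubmodular F) (htop : CubeTopMonotone F) :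
    CubeAntitone (fun p q r s => -F p q r s) := by
  obtain ⟨h₁, h₂, h₃, h₄, h₅, h₆⟩ := h
  obtain ⟨t₁, t₂, t₃, t₄⟩ := htop
  simp only [Bool.forall_bool] at h₁ h₂ h₃ h₄ h₅ h₆
  refine ⟨?_, ?_, ?_, ?_⟩ <;> simp only [Bool.forall_bool] <;>
    refine ⟨⟨⟨?_, ?_⟩, ?_, ?_⟩, ⟨?_, ?_⟩, ?_, ?_⟩ <;> linarith

theorem CubeSubmodular.or_add_and_le {F : Bool → Bool → Bool → Bool → ℝ} (h : CubeSubmodular F)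
    (p q r s p' q' r' s' : Bool) :
    F (p || p') (q || q') (r || r') (s || s') + F (p && p') (q && q') (r && r') (s && s') ≤
      F p q r s + F p' q' r' s' := by
  obtain ⟨h₁, h₂, h₃, h₄, h₅, h₆⟩ := h
  simp only [Bool.forall_bool] at h₁ h₂ h₃ h₄ h₅ h₆
  cases p <;> cases p' <;> cases q <;> cases q' <;> cases r <;> cases r' <;>
    cases s <;> cases s' <;> simp only [Bool.or_true, Bool.or_false,
      Bool.and_true, Bool.and_false, Bool.or_self, Bool.and_self] <;> linarith

/-- The subset of `{a, b, c, d}` with the given membership bits. -/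
def cubeSubset (a b c d : α) (p q r s : Bool) : Finset α :=
  (if p then {a} else ∅) ∪ (if q then {b} else ∅) ∪ (if r then {c} else ∅) ∪
    (if s then {d} else ∅)

section CubeSubset

variable {a b c d : α}

theorem mem_cubeSubset {p q r s : Bool} {z : α} :
    z ∈ cubeSubset a b c d p q r s ↔
      (z = a ∧ p) ∨ (z = b ∧ q) ∨ (z = c ∧ r) ∨ (z = d ∧ s) := by
  cases p <;> cases q <;> cases r <;> cases s <;> simp [cubeSubset]

theorem cubeSubset_subset (p q r s : Bool) : cubeSubset a b c d p q r s ⊆ {a, b, c, d} := by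
  intro z
  simp only [mem_cubeSubset, mem_insert, mem_singleton]
  tauto

theorem cubeSubset_decide_mem {A : Finset α} (hA : A ⊆ {a, b, c, d}) :
    cubeSubset a b c d (decide (a ∈ A)) (decide (b ∈ A)) (decide (c ∈ A)) (decide (d ∈ A)) = A := by
  ext z
  have hz := @hA z
  simp only [mem_cubeSubset, decide_eq_true_eq, mem_insert, mem_singleton] at hz ⊢
  grind

theorem cubeSubset_union (p q r s p' q' r' s' : Bool) :
    cubeSubset a b c d p q r s ∪ cubeSubset a b c d p' q' r' s' =
      cubeSubset a b c d (p || p') (q || q') (r || r') (s || s') := by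
  ext z
  simp only [mem_union, mem_cubeSubset, Bool.or_eq_true]
  tauto

theorem cubeSubset_inter (hnd : [a, b, c, d].Nodup) (p q r s p' q' r' s' : Bool) :
    cubeSubset a b c d p q r s ∩ cubeSubset a b c d p' q' r' s' =
      cubeSubset a b c d (p && p') (q && q') (r && r') (s && s') := by
  ext z
  simp only [mem_inter, mem_cubeSubset, Bool.and_eq_true]
  simp only [List.nodup_cons, List.mem_cons, List.not_mem_nil, not_or, or_false] at hnd
  grind

theorem IsPolymatroid.cubeSubmodular (hnd : [a, b, c, d].Nodup) {f : Finset α → ℝ}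
    (hf : IsPolymatroid {a, b, c, d} f) :
    CubeSubmodular (fun p q r s => f (cubeSubset a b c d p q r s)) := by
  have hsub : ∀ p q r s p' q' r' s',
      f (cubeSubset a b c d (p || p') (q || q') (r || r') (s || s')) +
        f (cubeSubset a b c d (p && p') (q && q') (r && r') (s && s')) ≤
      f (cubeSubset a b c d p q r s) + f (cubeSubset a b c d p' q' r' s') :=
    fun p q r s p' q' r' s' => by
      rw [← cubeSubset_union, ← cubeSubset_inter hnd]
      exact hf.2.2.2 _ _ (cubeSubset_subset p q r s) (cubeSubset_subset p' q' r' s')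
  refine ⟨fun r s => ?_, fun q s => ?_, fun q r => ?_, fun p s => ?_, fun p r => ?_,
    fun p q => ?_⟩
  · simpa using hsub true false r s false true r s
  · simpa using hsub true q false s false q true s
  · simpa using hsub true q r false false q r true
  · simpa using hsub p true false s p false true s
  · simpa using hsub p true r false p false r true
  · simpa using hsub p q true false p q false true

theorem IsPolymatroid.cubeTopMonotone {f : Finset α → ℝ} (hf : IsPolymatroid {a, b, c, d} f) :
    CubeTopMonotone (fun p q r s => f (cubeSubset a b c d p q r s)) := by
  have htop : ∀ p q r s,
      f (cubeSubset a b c d p q r s) ≤ f (cubeSubset a b c d true true true true) :=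
    fun p q r s => hf.2.2.1 _ _ (fun z hz => by
      simp only [mem_cubeSubset] at hz ⊢
      tauto) (cubeSubset_subset _ _ _ _)
  exact ⟨htop _ _ _ _, htop _ _ _ _, htop _ _ _ _, htop _ _ _ _⟩

theorem IsIncrement.of_cube (hnd : [a, b, c, d].Nodup) {f : Finset α → ℝ}
    {T : Bool → Bool → Bool → Bool → ℝ} (hnonneg : 0 ≤ T true true true true)
    (hanti : CubeAntitone T)
    (hsub : CubeSubmodular (fun p q r s => f (cubeSubset a b c d p q r s) + T p q r s))
    (htop : CubeTopMonotone (fun p q r s => f (cubeSubset a b c d p q r s) + T p q r s)) :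
    IsIncrement {a, b, c, d} f
      (fun A => T (decide (a ∈ A)) (decide (b ∈ A)) (decide (c ∈ A)) (decide (d ∈ A))) := by
  have hle : ∀ {z : α} {A B : Finset α}, A ⊆ B → decide (z ∈ A) ≤ decide (z ∈ B) :=
    fun hAB => Bool.le_iff_imp.2 (by simpa only [decide_eq_true_eq] using @hAB _)
  refine ⟨fun A _ => ?_, fun A B hAB _ => ?_, fun A B hAB hB => ?_, fun A B hA hB => ?_⟩
  · exact hnonneg.trans
      (hanti.le (Bool.le_true _) (Bool.le_true _) (Bool.le_true _) (Bool.le_true _))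
  · exact hanti.le (hle hAB) (hle hAB) (hle hAB) (hle hAB)
  · have h := (hsub.cubeAntitone_neg htop).le (hle (z := a) hAB) (hle (z := b) hAB)
      (hle (z := c) hAB) (hle (z := d) hAB)
    simpa only [neg_le_neg_iff, cubeSubset_decide_mem hB,
      cubeSubset_decide_mem (hAB.trans hB)] using h
  · have h := hsub.or_add_and_le (decide (a ∈ A)) (decide (b ∈ A)) (decide (c ∈ A))
      (decide (d ∈ A)) (decide (a ∈ B)) (decide (b ∈ B)) (decide (c ∈ B)) (decide (d ∈ B))
    simpa only [← cubeSubset_union, ← cubeSubset_inter hnd, cubeSubset_decide_mem hA,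
      cubeSubset_decide_mem hB, mem_union, mem_inter, Bool.decide_or, Bool.decide_and] using h

theorem eq_cubeSubset (a b c d : α) :
    ({a} : Finset α) = cubeSubset a b c d true false false false ∧
      ({b} : Finset α) = cubeSubset a b c d false true false false ∧
      ({c} : Finset α) = cubeSubset a b c d false false true false ∧
      ({d} : Finset α) = cubeSubset a b c d false false false true ∧
      (∅ : Finset α) = cubeSubset a b c d false false false false := by
  simp [cubeSubset]

theorem hasIncrement_of_cube (hnd : [a, b, c, d].Nodup) {f : Finset α → ℝ}
    {T : Bool → Bool → Bool → Bool → ℝ} (hnonneg : 0 ≤ T true true true true)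
    (hanti : CubeAntitone T)
    (hsub : CubeSubmodular (fun p q r s => f (cubeSubset a b c d p q r s) + T p q r s))
    (htop : CubeTopMonotone (fun p q r s => f (cubeSubset a b c d p q r s) + T p q r s)) :
    HasIncrement {a, b, c, d} f a b (T false false false false) (T true false false false)
      (T false true false false) (T true true false false) := by
  refine ⟨_, .of_cube hnd hnonneg hanti hsub htop, ?_, ?_, ?_, ?_⟩ <;>
    simp only [List.nodup_cons, List.mem_cons, List.not_mem_nil, not_or, or_false] at hnd <;>
    grind

end CubeSubset

/-- The candidate increments on `{a, b, c, d}`, coded by membership bits: the values on the subsets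
of `{c, d}` and on `{a}`, `{b}`, `{a, b}` are free, those on the sets with at least three elements
vanish, and joining `c` or `d` to `{a}` or `{b}` does not change the value, except possibly for the
set `{b, d}`. -/
def cubeTable (t u₁ u₂ m qa qb qb' k : ℝ) : Bool → Bool → Bool → Bool → ℝ
  | false, false, false, false => t
  | false, false, true, false => u₁
  | false, false, false, true => u₂
  | false, false, true, true => m
  | true, false, false, false | true, false, true, false | true, false, false, true => qa
  | false, true, false, false | false, true, true, false => qb
  | false, true, false, true => qb'
  | true, true, false, false => k
  | _, _, _, _ => 0

/-- A lower bound `e` for the Ingleton expressions of `f` on `{a, b, c, d}` other than the one whose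
first two arguments are `c` and `d`. -/
structure IngletonLowerBound (f : Finset α → ℝ) (a b c d : α) (e : ℝ) : Prop where
  ab : e ≤ ingleton f {a} {b} {c} {d}
  ac : e ≤ ingleton f {a} {c} {b} {d}
  ad : e ≤ ingleton f {a} {d} {b} {c}
  bc : e ≤ ingleton f {b} {c} {a} {d}
  bd : e ≤ ingleton f {b} {d} {a} {c}

section Tables

variable {a b c d : α} {f : Finset α → ℝ}

theorem hasIncrementSimplex_ingleton (hnd : [a, b, c, d].Nodup)
    (hf : IsPolymatroid {a, b, c, d} f) :
    HasIncrementSimplex {a, b, c, d} f a b (-ingleton f {a} {b} {c} {d}) := by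
  intro s t r hs ht hr h
  obtain ⟨h₁, h₂, h₃, h₄, h₅, h₆⟩ := hf.cubeSubmodular hnd
  obtain ⟨t₁, t₂, t₃, t₄⟩ := hf.cubeTopMonotone
  obtain ⟨ha, hb, hc, hd, h0⟩ := eq_cubeSubset a b c d
  have key := hasIncrement_of_cube hnd (f := f) (T := cubeTable
    (pmi f {a} {b} ∅ - -ingleton f {a} {b} {c} {d} + 2 * s + 2 * t + 4 * r)
    (pmi f {a} {b} {c} + s + t + 2 * r) (pmi f {a} {b} {d} + s + t + 2 * r) 0
    (s + r) (t + r) (t + r) r)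
  simp only [cubeTable] at key
  simp only [Bool.forall_bool, ingleton, pmi, ha, hb, hc, hd, h0, cubeSubset_union, Bool.or_true,
    Bool.or_false, Bool.or_self] at h h₁ h₂ h₃ h₄ h₅ h₆
  refine key le_rfl ?_ ?_ ?_ <;> clear key <;>
    simp only [CubeAntitone, CubeSubmodular, CubeTopMonotone, Bool.forall_bool, cubeTable, ingleton,
      pmi, ha, hb, hc, hd, h0, cubeSubset_union, Bool.or_true, Bool.or_false, Bool.or_self] <;>
    and_intros <;> linarith

theorem hasIncrementSimplex_ingleton_cross (hnd : [a, b, c, d].Nodup)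
    (hf : IsPolymatroid {a, b, c, d} f) :
    HasIncrementSimplex {a, b, c, d} f a b (-ingleton f {a} {c} {b} {d}) := by
  intro s t r hs ht hr h
  obtain ⟨h₁, h₂, h₃, h₄, h₅, h₆⟩ := hf.cubeSubmodular hnd
  obtain ⟨t₁, t₂, t₃, t₄⟩ := hf.cubeTopMonotone
  obtain ⟨ha, hb, hc, hd, h0⟩ := eq_cubeSubset a b c d
  have key := hasIncrement_of_cube hnd (f := f) (T := cubeTable
    (pmi f {a} {b} ∅ - -ingleton f {a} {c} {b} {d} + 2 * s + 2 * t + 4 * r)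
    (pmi f {a} {b} {c} + s + t + 2 * r)
    (pmi f {a} {b} ∅ + ingleton f {a} {c} {b} {d} - pmi f {b} {d} ∅ + 2 * s + t + 3 * r)
    (pmi f {a} {b} {c} + s + t + 2 * r)
    (s + r) (t + r) 0 r)
  simp only [cubeTable] at key
  simp only [Bool.forall_bool, ingleton, pmi, ha, hb, hc, hd, h0, cubeSubset_union, Bool.or_true,
    Bool.or_false, Bool.or_self] at h h₁ h₂ h₃ h₄ h₅ h₆
  refine key le_rfl ?_ ?_ ?_ <;> clear key <;>
    simp only [CubeAntitone, CubeSubmodular, CubeTopMonotone, Bool.forall_bool, cubeTable, ingleton,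
      pmi, ha, hb, hc, hd, h0, cubeSubset_union, Bool.or_true, Bool.or_false, Bool.or_self] <;>
    and_intros <;> linarith

-- These bounds on `m` are what Fourier–Motzkin elimination of `u₁` and `u₂` leaves of the
-- conditions in `exists_commonInformation`.
theorem exists_commonInformation_value (hnd : [a, b, c, d].Nodup)
    (hf : IsPolymatroid {a, b, c, d} f) (hI : IngletonLowerBound f a b c d 0) :
    ∃ m : ℝ, 0 ≤ m ∧ m ≤ pmi f {a} {b} ∅ ∧ m ≤ pmi f {a} {b} {c} ∧ m ≤ pmi f {a} {b} {d} ∧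
      m ≤ pmi f {a} {b} ({c} ∪ {d}) ∧
      pmi f {a} {b} ∅ + m ≤ pmi f {a} {b} {c} + pmi f {a} {b} {d} + pmi f {c} {d} ∅ ∧
      ∀ y ∈ ({a, b} : Set α), ∀ z ∈ ({a, b} : Set α),
        pmi f {a} {b} ∅ ≤ m + pmi f {c} {y} ∅ + pmi f {d} {z} {c} ∧
        pmi f {a} {b} ∅ ≤ m + pmi f {d} {y} ∅ + pmi f {c} {z} {d} ∧
        pmi f {a} {b} ∅ ≤ m + pmi f {c} {d} ∅ + pmi f {c} {y} {d} + pmi f {d} {z} {c} := by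
  obtain ⟨i₁, i₂, i₃, i₄, i₅⟩ := hI
  obtain ⟨h₁, h₂, h₃, h₄, h₅, h₆⟩ := hf.cubeSubmodular hnd
  obtain ⟨ha, hb, hc, hd, h0⟩ := eq_cubeSubset a b c d
  have hmin : ∀ x₁ x₂ x₃ x₄ x₅ : ℝ, ∃ m, m ≤ x₁ ∧ m ≤ x₂ ∧ m ≤ x₃ ∧ m ≤ x₄ ∧ m ≤ x₅ ∧
      ∀ l, l ≤ x₁ → l ≤ x₂ → l ≤ x₃ → l ≤ x₄ → l ≤ x₅ → l ≤ m := by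
    intro x₁ x₂ x₃ x₄ x₅
    refine ⟨min x₁ (min x₂ (min x₃ (min x₄ x₅))), ?_⟩
    simp only [min_le_iff, le_min_iff, le_refl, true_or, or_true, true_and]
    exact fun l h₁ h₂ h₃ h₄ h₅ => ⟨h₁, h₂, h₃, h₄, h₅⟩
  obtain ⟨m, m₁, m₂, m₃, m₄, m₅, hm⟩ := hmin (pmi f {a} {b} ∅) (pmi f {a} {b} {c})
    (pmi f {a} {b} {d}) (pmi f {a} {b} ({c} ∪ {d}))
    (pmi f {a} {b} {c} + pmi f {a} {b} {d} + pmi f {c} {d} ∅ - pmi f {a} {b} ∅)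
  refine ⟨m, ?_, m₁, m₂, m₃, m₄, by linarith, ?_⟩
  · simp only [Bool.forall_bool, ingleton, pmi, ha, hb, hc, hd, h0, cubeSubset_union, Bool.or_true,
      Bool.or_false, Bool.or_self] at *
    apply hm <;> linarith
  · simp only [Set.mem_insert_iff, Set.mem_singleton_iff, forall_eq_or_imp, forall_eq,
      Bool.forall_bool, ingleton, pmi, ha, hb, hc, hd, h0, cubeSubset_union, Bool.or_true,
      Bool.or_false, Bool.or_self, add_assoc, ← sub_le_iff_le_add] at *
    and_intros <;> apply hm <;> linarith

-- The increment of a common information of `a` and `b` vanishes on the sets meeting `{a, b}`; its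
-- values on `{c}`, `{d}` and `{c, d}` are `u₁`, `u₂` and `m`.
theorem exists_commonInformation (hnd : [a, b, c, d].Nodup)
    (hf : IsPolymatroid {a, b, c, d} f) (hI : IngletonLowerBound f a b c d 0) :
    ∃ u₁ u₂ m : ℝ, 0 ≤ m ∧ m ≤ pmi f {a} {b} ({c} ∪ {d}) ∧
      (m ≤ u₁ ∧ u₁ ≤ pmi f {a} {b} ∅ ∧ u₁ ≤ pmi f {a} {b} {c}) ∧
      (m ≤ u₂ ∧ u₂ ≤ pmi f {a} {b} ∅ ∧ u₂ ≤ pmi f {a} {b} {d}) ∧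
      pmi f {a} {b} ∅ + m ≤ u₁ + u₂ + pmi f {c} {d} ∅ ∧
      ∀ y ∈ ({a, b} : Set α),
        (u₁ ≤ m + pmi f {d} {y} {c} ∧ pmi f {a} {b} ∅ ≤ u₁ + pmi f {c} {y} ∅) ∧
        (u₂ ≤ m + pmi f {c} {y} {d} ∧ pmi f {a} {b} ∅ ≤ u₂ + pmi f {d} {y} ∅) := by
  obtain ⟨m, hm⟩ := exists_commonInformation_value hnd hf hI
  obtain ⟨h₁, h₂, h₃, h₄, h₅, h₆⟩ := hf.cubeSubmodular hnd
  obtain ⟨ha, hb, hc, hd, h0⟩ := eq_cubeSubset a b c d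
  generalize hJ : pmi f {a} {b} ∅ = I at *
  generalize hx : pmi f {c} {d} ∅ = x at *
  obtain ⟨u₁, hl₁, hg₁⟩ := exists_between_of_forall_le
    (s := {m, I - pmi f {c} {a} ∅, I - pmi f {c} {b} ∅, m - x, I + m - x - pmi f {a} {b} {d},
      I - x - pmi f {c} {a} {d}, I - x - pmi f {c} {b} {d}})
    (t := {I, pmi f {a} {b} {c}, m + pmi f {d} {a} {c}, m + pmi f {d} {b} {c}})
    ⟨m, by simp⟩ ⟨I, by simp⟩ (by
      subst hJ hx
      simp only [Set.mem_insert_iff, Set.mem_singleton_iff, forall_eq_or_imp, forall_eq,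
        Bool.forall_bool, pmi, ha, hb, hc, hd, h0, cubeSubset_union, Bool.or_true,
        Bool.or_false, Bool.or_self] at *
      and_intros <;> linarith)
  obtain ⟨u₂, hl₂, hg₂⟩ := exists_between_of_forall_le
    (s := {m, I - pmi f {d} {a} ∅, I - pmi f {d} {b} ∅, I + m - x - u₁})
    (t := {I, pmi f {a} {b} {d}, m + pmi f {c} {a} {d}, m + pmi f {c} {b} {d}})
    ⟨m, by simp⟩ ⟨I, by simp⟩ (by
      subst hJ hx
      simp only [mem_upperBounds, mem_lowerBounds, Set.mem_insert_iff, Set.mem_singleton_iff,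
        forall_eq_or_imp, forall_eq, Bool.forall_bool, pmi, ha, hb, hc, hd, h0, cubeSubset_union,
        Bool.or_true, Bool.or_false, Bool.or_self] at *
      and_intros <;> linarith)
  simp only [mem_upperBounds, mem_lowerBounds, Set.mem_insert_iff, Set.mem_singleton_iff,
    forall_eq_or_imp, forall_eq] at hl₁ hg₁ hl₂ hg₂ hm ⊢
  refine ⟨u₁, u₂, m, ?_⟩
  and_intros <;> linarith

theorem hasIncrementSimplex_zero (hnd : [a, b, c, d].Nodup) (hf : IsPolymatroid {a, b, c, d} f)
    (hI : IngletonLowerBound f a b c d 0) : HasIncrementSimplex {a, b, c, d} f a b 0 := by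
  suffices HasIncrement {a, b, c, d} f a b (pmi f {a} {b} ∅) 0 0 0 by
    intro s t r hs ht hr h
    obtain rfl : s = 0 := by linarith
    obtain rfl : t = 0 := by linarith
    obtain rfl : r = 0 := by linarith
    simpa only [mul_zero, add_zero, sub_zero] using this
  obtain ⟨u₁, u₂, m, hm⟩ := exists_commonInformation hnd hf hI
  obtain ⟨h₁, h₂, h₃, h₄, h₅, h₆⟩ := hf.cubeSubmodular hnd
  obtain ⟨t₁, t₂, t₃, t₄⟩ := hf.cubeTopMonotone
  obtain ⟨ha, hb, hc, hd, h0⟩ := eq_cubeSubset a b c d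
  have key := hasIncrement_of_cube hnd (f := f)
    (T := cubeTable (pmi f {a} {b} ∅) u₁ u₂ m 0 0 0 0)
  simp only [cubeTable] at key
  simp only [Set.mem_insert_iff, Set.mem_singleton_iff, forall_eq_or_imp, forall_eq,
    Bool.forall_bool, pmi, ha, hb, hc, hd, h0, cubeSubset_union, Bool.or_true, Bool.or_false,
    Bool.or_self] at h₁ h₂ h₃ h₄ h₅ h₆ hm
  refine key le_rfl ?_ ?_ ?_ <;> clear key <;>
    simp only [CubeAntitone, CubeSubmodular, CubeTopMonotone, Bool.forall_bool, cubeTable, pmi, ha,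
      hb, h0, cubeSubset_union, Bool.or_true, Bool.or_false, Bool.or_self] <;>
    and_intros <;> linarith

theorem exists_hasIncrementSimplex (hnd : [a, b, c, d].Nodup) (hf : IsPolymatroid {a, b, c, d} f)
    {e : ℝ} (he : e ≤ 0) (hI : IngletonLowerBound f a b c d e) :
    ∃ δ, 0 ≤ δ ∧ e ≤ -δ ∧ HasIncrementSimplex {a, b, c, d} f a b δ := by
  have of_neg : ∀ {i}, e ≤ i → i < 0 → HasIncrementSimplex {a, b, c, d} f a b (-i) →
      ∃ δ, 0 ≤ δ ∧ e ≤ -δ ∧ HasIncrementSimplex {a, b, c, d} f a b δ :=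
    fun hei hi h => ⟨_, neg_nonneg.2 hi.le, by rwa [neg_neg], h⟩
  have hdc : ({a, b, d, c} : Finset α) = {a, b, c, d} := by grind
  have hba : ({b, a, c, d} : Finset α) = {a, b, c, d} := by grind
  have hbadc : ({b, a, d, c} : Finset α) = {a, b, c, d} := by grind
  by_cases ab : ingleton f {a} {b} {c} {d} < 0
  · exact of_neg hI.ab ab (hasIncrementSimplex_ingleton hnd hf)
  by_cases ac : ingleton f {a} {c} {b} {d} < 0
  · exact of_neg hI.ac ac (hasIncrementSimplex_ingleton_cross hnd hf)
  by_cases ad : ingleton f {a} {d} {b} {c} < 0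
  · exact of_neg hI.ad ad (hdc ▸ hasIncrementSimplex_ingleton_cross (by grind) (hdc ▸ hf))
  by_cases bc : ingleton f {b} {c} {a} {d} < 0
  · exact of_neg hI.bc bc (hba ▸ hasIncrementSimplex_ingleton_cross (by grind) (hba ▸ hf)).swap
  by_cases bd : ingleton f {b} {d} {a} {c} < 0
  · exact of_neg hI.bd bd (hbadc ▸ hasIncrementSimplex_ingleton_cross (by grind) (hbadc ▸ hf)).swap
  simp only [not_lt] at ab ac ad bc bd
  exact ⟨0, le_rfl, by rwa [neg_zero], hasIncrementSimplex_zero hnd hf ⟨ab, ac, ad, bc, bd⟩⟩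

theorem IsIncrement.exists_extend {D₀ : Finset α → ℝ} (hnd : [a, b, c, d].Nodup)
    (hf : IsPolymatroid {a, b, c, d} f) (hD₀ : IsIncrement {a, b} f D₀)
    (hI : IngletonLowerBound f a b c d
      (D₀ ∅ - 2 * D₀ {a} - 2 * D₀ {b} - pmi f {a} {b} ∅)) :
    ∃ D, IsIncrement {a, b, c, d} f D ∧ ∀ A ⊆ {a, b}, D A = D₀ A := by
  have ha : ({a} : Finset α) ⊆ {a, b} := by grind
  have hb : ({b} : Finset α) ⊆ {a, b} := by grind
  have hk := hD₀.nonneg {a, b} le_rfl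
  have hka := hD₀.antitone {a} {a, b} ha le_rfl
  have hkb := hD₀.antitone {b} {a, b} hb le_rfl
  have hpab := hD₀.pmi_add_pmi_nonneg ha hb (empty_subset _)
  rw [pmi_singleton_singleton_empty D₀] at hpab
  obtain ⟨δ, hδ, he, hsimplex⟩ := exists_hasIncrementSimplex hnd hf (by linarith) hI
  obtain ⟨D, hD, hDp, hDa, hDb, hDk⟩ := hsimplex.hasIncrement hf (by simp) (by simp) hδ
    hk hka hkb (hD₀.antitone ∅ {a} (empty_subset _) ha) (hD₀.antitone ∅ {b} (empty_subset _) hb)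
    (by linarith) (by linarith) (by linarith [hD₀.add_monotone {a} {a, b} ha le_rfl])
    (by linarith [hD₀.add_monotone {b} {a, b} hb le_rfl])
  refine ⟨D, hD, fun A hA => ?_⟩
  obtain rfl | rfl | rfl | rfl : A = ∅ ∨ A = {a} ∨ A = {b} ∨ A = {a, b} := by
    exact_mod_cast Set.subset_pair_iff_eq.1 ((coe_subset.2 hA).trans_eq coe_pair)
  exacts [hDp, hDa, hDb, hDk]

theorem IsIncrement.exists_extend_iff {D₀ : Finset α → ℝ} (hnd : [a, b, c, d].Nodup)
    (hf : IsPolymatroid {a, b, c, d} f) (hD₀ : IsIncrement {a, b} f D₀) :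
    (∃ D, IsIncrement {a, b, c, d} f D ∧ ∀ A ⊆ {a, b}, D A = D₀ A) ↔
      ∀ a' b' c' d' : α, ({a', b'} : Finset α) = {a, b} → ({c', d'} : Finset α) = {c, d} →
        ∀ s : Bool, D₀ ∅ - 2 * D₀ {a'} - 2 * D₀ {b'} - pmi f {a'} {b'} ∅ ≤
          if s then ingleton f {a'} {b'} {c'} {d'} else ingleton f {a'} {c'} {b'} {d'} := by
  constructor
  · rintro ⟨D, hD, hDD₀⟩ a' b' c' d' hab hcd s
    have ha' : {a'} ⊆ ({a, b} : Finset α) := by grind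
    have hb' : {b'} ⊆ ({a, b} : Finset α) := by grind
    have hc' : {c'} ⊆ ({a, b, c, d} : Finset α) := by grind
    have hd' : {d'} ⊆ ({a, b, c, d} : Finset α) := by grind
    have hM : ({a, b} : Finset α) ⊆ {a, b, c, d} := by grind
    rw [← hDD₀ ∅ (empty_subset _), ← hDD₀ _ ha', ← hDD₀ _ hb']
    cases s <;> simp only [Bool.false_eq_true, if_false, if_true]
    · linarith [hD.le_add_ingleton_cross (ha'.trans hM) hc' (hb'.trans hM) hd']
    · linarith [hD.le_add_ingleton (ha'.trans hM) (hb'.trans hM) hc' hd']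
  · intro h
    have swap : D₀ ∅ - 2 * D₀ {b} - 2 * D₀ {a} - pmi f {b} {a} ∅ =
        D₀ ∅ - 2 * D₀ {a} - 2 * D₀ {b} - pmi f {a} {b} ∅ := by
      rw [pmi_comm, sub_right_comm _ (2 * D₀ {b})]
    exact hD₀.exists_extend hnd hf ⟨h a b c d rfl rfl true, h a b c d rfl rfl false,
      h a b d c rfl (pair_comm d c) false, swap ▸ h b a c d (pair_comm b a) rfl false,
      swap ▸ h b a d c (pair_comm b a) (pair_comm d c) false⟩

end Tables

/-- `f_X` on `{a,b,x1,x2}` and `f_y` on `{a,b,y}` have an amalgam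
iff `{f_X[a,b,x1,x2] or f_X[a,x1,b,x2]} + f_y(y,a|b)+f_y(y,b|a)+f_y(a,b|y)+3f_y(y|ab) ≥ 0`
for each braced choice and all exchanges of `a` with `b` and of `x1` with `x2`. -/
theorem statement_16 (a b x1 x2 y : α) (hnd : ([a, b, x1, x2, y] : List α).Nodup)
    (f fX fy : Finset α → ℝ)
    (hf : IsPolymatroid {a, b} f)
    (hfX : IsPolymatroid {a, b, x1, x2} fX) (hfy : IsPolymatroid {a, b, y} fy)
    (hrX : ∀ A ⊆ ({a, b} : Finset α), fX A = f A)
    (hry : ∀ A ⊆ ({a, b} : Finset α), fy A = f A) :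
    HaveAmalgam {a, b} {x1, x2} {y} fX fy ↔
      ∀ a' b' x1' x2' : α, ({a', b'} : Finset α) = {a, b} →
        ({x1', x2'} : Finset α) = {x1, x2} → ∀ s : Bool,
        0 ≤ (if s then ingleton fX {a'} {b'} {x1'} {x2'}
              else ingleton fX {a'} {x1'} {b'} {x2'}) +
            pmi fy {y} {a'} {b'} + pmi fy {y} {b'} {a'} + pmi fy {a'} {b'} {y} +
            3 * pcd fy {y} {a', b'} := by
  have hM : ({a, b} ∪ {x1, x2} : Finset α) = {a, b, x1, x2} := by grind
  have hy : y ∉ ({a, b, x1, x2} : Finset α) := by grind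
  have hXy : ∀ A ⊆ ({a, b} : Finset α), fX A = fy A := fun A hA => (hrX A hA).trans (hry A hA).symm
  have hD₀ : IsIncrement {a, b} fX (fun A => fy (insert y A) - fy A) := by
    have hyab : ({a, b, y} : Finset α) = insert y {a, b} := by grind
    exact ((hyab ▸ hfy).isIncrement (by grind)).congr (fun A hA => (hXy A hA).symm) fun _ _ => rfl
  rw [haveAmalgam_singleton_iff (hM ▸ hy) (hM ▸ hfX) hXy, hM,
    hD₀.exists_extend_iff (by grind) hfX]
  refine forall₄_congr fun a' b' c' d' => forall₃_congr fun hab _ s => ?_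
  have hpmi : pmi fX {a'} {b'} ∅ = pmi fy {a'} {b'} ∅ := by
    simp only [pmi, union_empty]
    rw [hXy _ (by grind), hXy _ (by grind), hXy _ (by grind), hXy _ (by grind)]
  rw [hpmi]
  have hid := pmi_add_pmi_add_pmi_add_pcd fy a' b' y
  constructor <;> intro h <;> linarith
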